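/- Let l ≥ -1/2 be real and let ω > 0. Define h(x) = x^{-l}/(2^{l+1/2} Γ(l+3/2)) · ∫₀ˣ (x² - s²)^l sin(ωs) ds. Then for every x > 0, h is twice differentiable at x and h''(x) - (l(l+1)/x²)·h(x) + ω²·h(x) = 2(l+1)·ω·C₁·x^l, where C₁ = Γ(l+1)/(2^{l+3/2} Γ(l+3/2) Γ(l+2)). -/

import Mathlib

/-!
Let `K = 1 / (2^(l+1/2) Γ(l+3/2))`. Substituting `s = x t` gives `Y_l f(x) = K x^(l+1) g(x)` with
`g(x) = ∫₀¹ (1 - t²)^l f(x t) dt`, an integral over a fixed interval that may be differentiated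
under the integral sign. Conjugating `L₀` by `x^(l+1)` yields
`L₀ (x^(l+1) g) = x^l (x g'' + 2(l+1) g')`, and since
`2(l+1) t (1 - t²)^l = -d/dt (1 - t²)^(l+1)`, one integration by parts turns the right-hand side
into `x^l (f'(0) + x ∫₀¹ (1 - t²)^l f''(x t) dt)`. Hence `L₀ (Y_l f) = Y_l f'' + K f'(0) x^l` for
every `C²` function `f`. For `f = sin(ω ·)` one has `f'' = -ω² f` and `f'(0) = ω`, and
`K = 2(l+1) C₁`.
-/

open MeasureTheory Set Topology

section DilationIntegral

variable {E : Type*} [NormedAddCommGroup E] [NormedSpace ℝ E] {w : ℝ → ℝ} {f : ℝ → E}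

/-- The average `∫₀¹ w(t) f(x t) dt` of the dilates of `f`, with weight `w`. It expresses `Y_l f` as
an integral over a fixed interval. -/
noncomputable def dilationIntegral (w : ℝ → ℝ) (f : ℝ → E) (x : ℝ) : E :=
  ∫ t in (0 : ℝ)..1, w t • f (x * t)

theorem intervalIntegrable_smul_comp_mul (hw : IntervalIntegrable w volume 0 1)
    (hf : Continuous f) (x : ℝ) :
    IntervalIntegrable (fun t ↦ w t • f (x * t)) volume 0 1 :=
  hw.smul_continuousOn (by fun_prop)

theorem hasDerivAt_dilationIntegral (hw : IntervalIntegrable w volume 0 1) (hf : ContDiff ℝ 1 f)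
    (x : ℝ) :
    HasDerivAt (dilationIntegral w f) (dilationIntegral (fun t ↦ w t * t) (deriv f) x) x := by
  have hf' : Continuous (deriv f) := hf.continuous_deriv_one
  have hwt : IntervalIntegrable (fun t ↦ w t * t) volume 0 1 := hw.mul_continuousOn (by fun_prop)
  obtain ⟨C, hC⟩ : ∃ C, ∀ p ∈ Metric.closedBall x 1 ×ˢ uIcc (0 : ℝ) 1,
      ‖deriv f (p.1 * p.2)‖ ≤ C :=
    ((isCompact_closedBall x 1).prod isCompact_uIcc).exists_bound_of_continuousOn (by fun_prop)
  refine (intervalIntegral.hasDerivAt_integral_of_dominated_loc_of_deriv_le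
    (F' := fun y t ↦ (w t * t) • deriv f (y * t)) (bound := fun t ↦ ‖w t * t‖ * C)
    (Metric.closedBall_mem_nhds x one_pos)
    (.of_forall fun y ↦
      (intervalIntegrable_smul_comp_mul hw hf.continuous y).def'.aestronglyMeasurable)
    (intervalIntegrable_smul_comp_mul hw hf.continuous x)
    (intervalIntegrable_smul_comp_mul hwt hf' x).def'.aestronglyMeasurable
    (.of_forall fun t ht y hy ↦ ?_) (hwt.norm.mul_const C) (.of_forall fun t _ y _ ↦ ?_)).2
  · rw [norm_smul]
    gcongr
    exact hC (y, t) ⟨hy, uIoc_subset_uIcc ht⟩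
  · have hft : HasDerivAt (fun y ↦ f (y * t)) (t • deriv f (y * t)) y :=
      (hf.differentiable_one _).hasDerivAt.scomp y (hasDerivAt_mul_const t)
    simpa only [mul_smul] using hft.fun_const_smul (w t)

end DilationIntegral

section JacobiWeight

variable {E : Type*} [NormedAddCommGroup E] [NormedSpace ℝ E] {l : ℝ} {f : ℝ → E}

theorem one_sub_sq_nonneg_of_mem_uIcc {t : ℝ} (ht : t ∈ uIcc (0 : ℝ) 1) : 0 ≤ 1 - t ^ 2 := by
  rw [uIcc_of_le zero_le_one] at ht
  nlinarith [ht.1, ht.2]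

theorem intervalIntegrable_one_sub_sq_rpow (hl : -1 < l) :
    IntervalIntegrable (fun t : ℝ ↦ (1 - t ^ 2) ^ l) volume 0 1 := by
  have h_singular : IntervalIntegrable (fun t : ℝ ↦ (1 - t) ^ l) volume 0 1 := by
    simpa using
      ((intervalIntegral.intervalIntegrable_rpow' (a := 0) (b := 1) hl).comp_sub_left 1).symm
  have h_regular : ContinuousOn (fun t : ℝ ↦ (1 + t) ^ l) (uIcc 0 1) := by
    rw [uIcc_of_le zero_le_one]
    exact .rpow_const (by fun_prop) fun t ht ↦ .inl (by linarith [ht.1])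
  refine (h_singular.mul_continuousOn h_regular).congr fun t ht ↦ ?_
  rw [uIoc_of_le zero_le_one] at ht
  rw [← Real.mul_rpow (by linarith [ht.2]) (by linarith [ht.1])]
  ring_nf

theorem dilationIntegral_one_sub_sq_rpow_add_one (hl : -1 < l) (hf : Continuous f) (x : ℝ) :
    dilationIntegral (fun t ↦ (1 - t ^ 2) ^ (l + 1)) f x =
      dilationIntegral (fun t ↦ (1 - t ^ 2) ^ l) f x -
        dilationIntegral (fun t ↦ (1 - t ^ 2) ^ l * t * t) f x := by
  have hw := intervalIntegrable_one_sub_sq_rpow hl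
  have hwtt : IntervalIntegrable (fun t : ℝ ↦ (1 - t ^ 2) ^ l * t * t) volume 0 1 :=
    (hw.mul_continuousOn (by fun_prop)).mul_continuousOn (by fun_prop)
  unfold dilationIntegral
  rw [← intervalIntegral.integral_sub (intervalIntegrable_smul_comp_mul hw hf x)
    (intervalIntegrable_smul_comp_mul hwtt hf x)]
  refine intervalIntegral.integral_congr fun t ht ↦ ?_
  simp only
  rw [Real.rpow_add_one' (one_sub_sq_nonneg_of_mem_uIcc ht) (by linarith)]
  module

theorem hasDerivAt_one_sub_sq_rpow_add_one (l : ℝ) {t : ℝ} (ht : 0 < 1 - t ^ 2) :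
    HasDerivAt (fun t : ℝ ↦ (1 - t ^ 2) ^ (l + 1)) (-(2 * (l + 1) * ((1 - t ^ 2) ^ l * t))) t := by
  have h_base : HasDerivAt (fun t : ℝ ↦ 1 - t ^ 2) (-(2 * t)) t := by
    simpa using (hasDerivAt_pow 2 t).const_sub 1
  refine (h_base.rpow_const (p := l + 1) (.inl ht.ne')).congr_deriv ?_
  rw [add_sub_cancel_right]
  ring

theorem dilationIntegral_one_sub_sq_rpow_mul_self [CompleteSpace E] (hl : -1 < l)
    (hf : ContDiff ℝ 1 f) (x : ℝ) :
    (2 * (l + 1)) • dilationIntegral (fun t ↦ (1 - t ^ 2) ^ l * t) f x =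
      f 0 + x • dilationIntegral (fun t ↦ (1 - t ^ 2) ^ (l + 1)) (deriv f) x := by
  have hwt : IntervalIntegrable (fun t : ℝ ↦ (1 - t ^ 2) ^ l * t) volume 0 1 :=
    (intervalIntegrable_one_sub_sq_rpow hl).mul_continuousOn (by fun_prop)
  have h_cont : Continuous fun t : ℝ ↦ (1 - t ^ 2) ^ (l + 1) :=
    .rpow_const (by fun_prop) fun t ↦ .inr (by linarith)
  have h_int : IntervalIntegrable (fun t ↦ (2 * (l + 1)) • ((1 - t ^ 2) ^ l * t) • f (x * t))
      volume 0 1 := (intervalIntegrable_smul_comp_mul hwt hf.continuous x).smul _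
  have h_int' : IntervalIntegrable (fun t ↦ x • (1 - t ^ 2) ^ (l + 1) • deriv f (x * t))
      volume 0 1 :=
    (intervalIntegrable_smul_comp_mul (h_cont.intervalIntegrable 0 1)
      hf.continuous_deriv_one x).smul x
  have h_deriv : ∀ t ∈ Ioo (0 : ℝ) 1, HasDerivAt (fun t ↦ -((1 - t ^ 2) ^ (l + 1) • f (x * t)))
      ((2 * (l + 1)) • ((1 - t ^ 2) ^ l * t) • f (x * t) -
        x • (1 - t ^ 2) ^ (l + 1) • deriv f (x * t)) t := by
    intro t ht
    have hft : HasDerivAt (fun t ↦ f (x * t)) (x • deriv f (x * t)) t :=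
      (hf.differentiable_one _).hasDerivAt.scomp t (hasDerivAt_const_mul x)
    refine ((hasDerivAt_one_sub_sq_rpow_add_one l
      (by nlinarith [ht.1, ht.2])).smul hft).neg.congr_deriv ?_
    module
  have h_ftc := intervalIntegral.integral_eq_sub_of_hasDerivAt_of_le zero_le_one
    (by have := hf.continuous; fun_prop) h_deriv (h_int.sub h_int')
  rw [intervalIntegral.integral_sub h_int h_int', intervalIntegral.integral_smul,
    intervalIntegral.integral_smul] at h_ftc
  rw [← sub_eq_iff_eq_add]
  simpa [dilationIntegral, Real.zero_rpow (show l + 1 ≠ 0 by linarith)] using h_ftc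

theorem smul_dilationIntegral_deriv_add_smul_dilationIntegral [CompleteSpace E] (hl : -1 < l)
    (hf : ContDiff ℝ 1 f) (x : ℝ) :
    x • dilationIntegral (fun t ↦ (1 - t ^ 2) ^ l * t * t) (deriv f) x +
        (2 * (l + 1)) • dilationIntegral (fun t ↦ (1 - t ^ 2) ^ l * t) f x =
      f 0 + x • dilationIntegral (fun t ↦ (1 - t ^ 2) ^ l) (deriv f) x := by
  rw [dilationIntegral_one_sub_sq_rpow_mul_self hl hf,
    dilationIntegral_one_sub_sq_rpow_add_one hl hf.continuous_deriv_one]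
  module

end JacobiWeight

section RpowSmul

variable {E : Type*} [NormedAddCommGroup E] [NormedSpace ℝ E] {g g' : ℝ → E} {g'' : E} {x : ℝ}

theorem hasDerivAt_deriv_rpow_smul (p : ℝ) (hx : x ≠ 0)
    (hg : ∀ᶠ y in 𝓝 x, HasDerivAt g (g' y) y) (hg' : HasDerivAt g' g'' x) :
    HasDerivAt (deriv fun y ↦ y ^ p • g y)
      (x ^ p • g'' + (2 * p * x ^ (p - 1)) • g' x + (p * (p - 1) * x ^ (p - 2)) • g x) x := by
  have h_deriv : deriv (fun y ↦ y ^ p • g y) =ᶠ[𝓝 x]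
      fun y ↦ y ^ p • g' y + (p * y ^ (p - 1)) • g y := by
    filter_upwards [isOpen_ne.mem_nhds hx, hg] with y hy hgy
    exact ((Real.hasDerivAt_rpow_const (.inl hy)).smul hgy).deriv
  have h_rpow := Real.hasDerivAt_rpow_const (p := p) (.inl hx)
  have h_rpow' := (Real.hasDerivAt_rpow_const (p := p - 1) (.inl hx)).const_mul p
  refine (((h_rpow.smul hg').add (h_rpow'.smul hg.self_of_nhds)).congr_of_eventuallyEq
    h_deriv).congr_deriv ?_
  rw [show p - 1 - 1 = p - 2 by ring]
  module

end RpowSmul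

section BesselTransmutation

variable {E : Type*} [NormedAddCommGroup E] [NormedSpace ℝ E] {l x : ℝ} {f : ℝ → E}

/-- The operator `Y_l`, which intertwines `d²/dx²` with `L₀ = d²/dx² - l(l+1)/x²` up to a multiple
of `x^l`. It is meant for `0 < x`. -/
noncomputable def besselTransmutation (l : ℝ) (f : ℝ → E) (x : ℝ) : E :=
  (x ^ (-l) / (2 ^ (l + 1 / 2) * Real.Gamma (l + 3 / 2))) •
    ∫ s in (0 : ℝ)..x, (x ^ 2 - s ^ 2) ^ l • f s

theorem besselTransmutation_const_smul (l c : ℝ) (f : ℝ → E) (x : ℝ) :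
    besselTransmutation l (fun s ↦ c • f s) x = c • besselTransmutation l f x := by
  simp only [besselTransmutation, smul_comm _ c, intervalIntegral.integral_smul]

theorem integral_sq_sub_sq_rpow_smul (l : ℝ) (f : ℝ → E) (hx : 0 < x) :
    ∫ s in (0 : ℝ)..x, (x ^ 2 - s ^ 2) ^ l • f s =
      x ^ (2 * l + 1) • dilationIntegral (fun t ↦ (1 - t ^ 2) ^ l) f x := by
  have h_subst := intervalIntegral.smul_integral_comp_mul_left (a := 0) (b := 1)
    (fun s ↦ (x ^ 2 - s ^ 2) ^ l • f s) x
  rw [mul_zero, mul_one] at h_subst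
  rw [← h_subst, dilationIntegral, ← intervalIntegral.integral_smul,
    ← intervalIntegral.integral_smul]
  refine intervalIntegral.integral_congr fun t ht ↦ ?_
  have h_scale : (x ^ 2 - (x * t) ^ 2) ^ l = x ^ (2 * l) * (1 - t ^ 2) ^ l := by
    rw [show x ^ 2 - (x * t) ^ 2 = x ^ 2 * (1 - t ^ 2) by ring,
      Real.mul_rpow (by positivity) (one_sub_sq_nonneg_of_mem_uIcc ht), Real.rpow_mul hx.le,
      Real.rpow_two]
  simp only [h_scale, Real.rpow_add_one hx.ne']
  module

theorem besselTransmutation_eq_rpow_smul (l : ℝ) (f : ℝ → E) (hx : 0 < x) :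
    besselTransmutation l f x = (2 ^ (l + 1 / 2) * Real.Gamma (l + 3 / 2))⁻¹ •
      x ^ (l + 1) • dilationIntegral (fun t ↦ (1 - t ^ 2) ^ l) f x := by
  have h_pow : x ^ (l + 1) = x ^ (-l) * x ^ (2 * l + 1) := by
    rw [← Real.rpow_add hx]
    ring_nf
  rw [besselTransmutation, integral_sq_sub_sq_rpow_smul l f hx, h_pow]
  module

theorem besselTransmutation_eventuallyEq_rpow_smul (l : ℝ) (f : ℝ → E) (hx : 0 < x) :
    besselTransmutation l f =ᶠ[𝓝 x] (2 ^ (l + 1 / 2) * Real.Gamma (l + 3 / 2))⁻¹ •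
      fun y ↦ y ^ (l + 1) • dilationIntegral (fun t ↦ (1 - t ^ 2) ^ l) f y := by
  filter_upwards [lt_mem_nhds hx] with y hy using besselTransmutation_eq_rpow_smul l f hy

theorem differentiableAt_besselTransmutation (hl : -1 < l) (hf : ContDiff ℝ 1 f) (hx : 0 < x) :
    DifferentiableAt ℝ (besselTransmutation l f) x := by
  have hg := hasDerivAt_dilationIntegral (intervalIntegrable_one_sub_sq_rpow hl) hf x
  have h_rpow_smul := (Real.hasDerivAt_rpow_const (p := l + 1) (.inl hx.ne')).smul hg
  exact (h_rpow_smul.differentiableAt.const_smul _).congr_of_eventuallyEq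
    (besselTransmutation_eventuallyEq_rpow_smul l f hx)

theorem hasDerivAt_deriv_besselTransmutation [CompleteSpace E] (hl : -1 < l)
    (hf : ContDiff ℝ 2 f) (hx : 0 < x) :
    HasDerivAt (deriv (besselTransmutation l f))
      (besselTransmutation l (deriv (deriv f)) x +
        (l * (l + 1) / x ^ 2) • besselTransmutation l f x +
        ((2 ^ (l + 1 / 2) * Real.Gamma (l + 3 / 2))⁻¹ * x ^ l) • deriv f 0) x := by
  have hf' : ContDiff ℝ 1 (deriv f) := hf.deriv'
  have hw := intervalIntegrable_one_sub_sq_rpow hl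
  have hwt : IntervalIntegrable (fun t : ℝ ↦ (1 - t ^ 2) ^ l * t) volume 0 1 :=
    hw.mul_continuousOn (by fun_prop)
  have h_second := (hasDerivAt_deriv_rpow_smul (l + 1) hx.ne'
    (.of_forall (hasDerivAt_dilationIntegral hw (hf.of_le one_le_two)))
    (hasDerivAt_dilationIntegral hwt hf' x)).const_smul
      (2 ^ (l + 1 / 2) * Real.Gamma (l + 3 / 2))⁻¹
  have h_deriv : deriv (besselTransmutation l f) =ᶠ[𝓝 x]
      (2 ^ (l + 1 / 2) * Real.Gamma (l + 3 / 2))⁻¹ •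
        deriv fun y ↦ y ^ (l + 1) • dilationIntegral (fun t ↦ (1 - t ^ 2) ^ l) f y :=
    (besselTransmutation_eventuallyEq_rpow_smul l f hx).deriv.trans
      (.of_forall fun _ ↦ deriv_const_smul_field _ _)
  refine (h_second.congr_of_eventuallyEq h_deriv).congr_deriv ?_
  have h_pow : x ^ (l + 1 - 2) = x ^ (l + 1) / x ^ 2 := by
    rw [Real.rpow_sub hx, Real.rpow_two]
  rw [besselTransmutation_eq_rpow_smul l _ hx, besselTransmutation_eq_rpow_smul l f hx, h_pow,
    add_sub_cancel_right, Real.rpow_add_one hx.ne']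
  linear_combination (norm := module)
    ((2 ^ (l + 1 / 2) * Real.Gamma (l + 3 / 2))⁻¹ * x ^ l) •
      smul_dilationIntegral_deriv_add_smul_dilationIntegral hl hf' x

end BesselTransmutation

/-- The factor in parentheses is the constant `C₁` with `Y_l[s ↦ s](x) = C₁ x^(l+2)`. -/
theorem two_mul_add_one_mul_Gamma_div {l : ℝ} (hl : -1 < l) :
    2 * (l + 1) * (Real.Gamma (l + 1) /
      (2 ^ (l + 3 / 2) * Real.Gamma (l + 3 / 2) * Real.Gamma (l + 2))) =
      (2 ^ (l + 1 / 2) * Real.Gamma (l + 3 / 2))⁻¹ := by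
  have hl_ne : l + 1 ≠ 0 := by linarith
  have hΓ : Real.Gamma (l + 1) ≠ 0 := (Real.Gamma_pos_of_pos (by linarith)).ne'
  have hΓ_succ : Real.Gamma (l + 2) = (l + 1) * Real.Gamma (l + 1) := by
    rw [← Real.Gamma_add_one hl_ne]
    ring_nf
  have h_two : (2 : ℝ) ^ (l + 3 / 2) = 2 ^ (l + 1 / 2) * 2 := by
    rw [← Real.rpow_add_one two_ne_zero]
    ring_nf
  rw [hΓ_succ, h_two]
  field_simp

theorem deriv_sin_const_mul (ω : ℝ) :
    deriv (fun s ↦ Real.sin (ω * s)) = fun s ↦ ω * Real.cos (ω * s) := by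
  ext s
  rw [deriv_comp_mul_left, Real.deriv_sin, smul_eq_mul]

theorem deriv_deriv_sin_const_mul (ω : ℝ) :
    deriv (deriv fun s ↦ Real.sin (ω * s)) = fun s ↦ (-ω ^ 2) • Real.sin (ω * s) := by
  rw [deriv_sin_const_mul]
  ext s
  rw [deriv_const_mul_field, deriv_comp_mul_left, Real.deriv_cos, smul_eq_mul, smul_eq_mul]
  ring

theorem stmt_4_general (l ω : ℝ) (hl : -1 < l) (h : ℝ → ℝ)
    (hh : ∀ x : ℝ, h x = x ^ (-l) / (2 ^ (l + 1 / 2) * Real.Gamma (l + 3 / 2)) *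
        ∫ s in (0 : ℝ)..x, (x ^ 2 - s ^ 2) ^ l * Real.sin (ω * s)) :
    ∀ x : ℝ, 0 < x →
      DifferentiableAt ℝ h x ∧ DifferentiableAt ℝ (deriv h) x ∧
      deriv (deriv h) x - l * (l + 1) / x ^ 2 * h x + ω ^ 2 * h x =
        2 * (l + 1) * ω *
            (Real.Gamma (l + 1) /
              (2 ^ (l + 3 / 2) * Real.Gamma (l + 3 / 2) * Real.Gamma (l + 2))) *
          x ^ l := by
  obtain rfl : h = besselTransmutation l fun s ↦ Real.sin (ω * s) := funext hh
  intro x hx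
  have h_second := hasDerivAt_deriv_besselTransmutation hl
    (f := fun s ↦ Real.sin (ω * s)) (by fun_prop) hx
  refine ⟨differentiableAt_besselTransmutation hl (by fun_prop) hx, h_second.differentiableAt, ?_⟩
  rw [h_second.deriv, deriv_deriv_sin_const_mul, besselTransmutation_const_smul,
    deriv_sin_const_mul, ← two_mul_add_one_mul_Gamma_div hl]
  simp only [smul_eq_mul, mul_zero, Real.cos_zero]
  ring

/-- `h = Y_l[sin(ω·)]` solves the inhomogeneous Bessel equation
`h'' - (l(l+1)/x²)h + ω²h = 2(l+1)ω C₁ x^l`. -/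
theorem stmt_4 (l ω : ℝ) (hl : -(1/2) ≤ l) (hω : 0 < ω)
    (h : ℝ → ℝ)
    (hh : ∀ x : ℝ, h x = x ^ (-l) / (2 ^ (l + 1/2) * Real.Gamma (l + 3/2)) *
        ∫ s in (0:ℝ)..x, (x ^ 2 - s ^ 2) ^ l * Real.sin (ω * s)) :
    ∀ x : ℝ, 0 < x →
      DifferentiableAt ℝ h x ∧ DifferentiableAt ℝ (deriv h) x ∧
      deriv (deriv h) x - l * (l + 1) / x ^ 2 * h x + ω ^ 2 * h x =
        2 * (l + 1) * ω *
            (Real.Gamma (l + 1) /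
              (2 ^ (l + 3/2) * Real.Gamma (l + 3/2) * Real.Gamma (l + 2))) *
          x ^ l :=
  stmt_4_general l ω (by linarith) h hh
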